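/- Corner cone approximation: let R ⊆ S be (d+1)-dimensional polytopes sharing the vertex 0, and suppose pyramidal growth coincides with inclusion in dimension d. Then there exist finitely many points z₁,…,z_m ∈ S such that each conv(R ∪ {z₁,…,z_j}) is a pyramidal extension of conv(R ∪ {z₁,…,z_{j−1}}), and ℝ₊·conv(R ∪ {z₁,…,z_m}) = ℝ₊·S. -/

import Mathlib

open Set

noncomputable section

/-- A polytope: the convex hull of a finite set of points. -/
def IsPolytope {E : Type*} [AddCommGroup E] [Module ℝ E] (P : Set E) : Prop :=
  ∃ s : Finset E, P = convexHull ℝ (s : Set E)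

/-- The dimension of a set: the dimension of its affine hull. -/
def polyDim {E : Type*} [AddCommGroup E] [Module ℝ E] (P : Set E) : ℕ :=
  Module.finrank ℝ (affineSpan ℝ P).direction

/-- A facet: an exposed face of dimension one less. -/
def IsFacet {E : Type*} [NormedAddCommGroup E] [NormedSpace ℝ E] (F P : Set E) : Prop :=
  IsExposed ℝ P F ∧ polyDim F + 1 = polyDim P

/-- `Δ` is a pyramid with base the polytope `B` and apex `v`. -/
def IsPyramidOver {E : Type*} [AddCommGroup E] [Module ℝ E]
    (Δ B : Set E) (v : E) : Prop :=
  IsPolytope B ∧ v ∉ affineSpan ℝ B ∧ Δ = convexHull ℝ (B ∪ {v})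

/-- Pyramidal extension: `closure (Q \ P)` is a pyramid whose intersection with `P`
is a facet of it. -/
def PyramidalExt {E : Type*} [NormedAddCommGroup E] [NormedSpace ℝ E]
    (P Q : Set E) : Prop :=
  IsPolytope P ∧ IsPolytope Q ∧ P ⊆ Q ∧
    (∃ B v, IsPyramidOver (closure (Q \ P)) B v) ∧
    IsFacet (closure (Q \ P) ∩ P) (closure (Q \ P))

end

/-- The conical hull of a set. -/
def coneOf {E : Type*} [AddCommGroup E] [Module ℝ E] (T : Set E) : Set E :=
  {y | ∃ c : ℝ, 0 ≤ c ∧ ∃ x ∈ T, y = c • x}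



section Aux

variable {E : Type*} [NormedAddCommGroup E] [NormedSpace ℝ E]

theorem convexHull_union_convexHull_right' (A B : Set E) :
    convexHull ℝ (A ∪ convexHull ℝ B) = convexHull ℝ (A ∪ B) := by
  apply Set.Subset.antisymm
  · apply convexHull_min _ (convex_convexHull ℝ _)
    exact Set.union_subset (Set.subset_union_left.trans (subset_convexHull ℝ _))
      (convexHull_mono Set.subset_union_right)
  · exact convexHull_mono (Set.union_subset_union_right _ (subset_convexHull ℝ _))

theorem comb_le {a b x y c : ℝ} (ha : 0 ≤ a) (hb : 0 ≤ b) (hab : a + b = 1) (hx : x ≤ c)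
    (hy : y ≤ c) : a * x + b * y ≤ c := by
  have e : b = 1 - a := by linarith
  have h1 := mul_nonneg ha (sub_nonneg.2 hx)
  have h2 := mul_nonneg hb (sub_nonneg.2 hy)
  subst e
  linarith

theorem comb_lt {a b x y c : ℝ} (ha : 0 < a) (hb : 0 ≤ b) (hab : a + b = 1) (hx : x < c)
    (hy : y ≤ c) : a * x + b * y < c := by
  have e : b = 1 - a := by linarith
  have h1 := mul_pos ha (sub_pos.2 hx)
  have h2 := mul_nonneg hb (sub_nonneg.2 hy)
  subst e
  linarith

theorem lt_comb {a b x y c : ℝ} (ha : 0 < a) (hb : 0 ≤ b) (hab : a + b = 1) (hx : c < x)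
    (hy : c ≤ y) : c < a * x + b * y := by
  have e : b = 1 - a := by linarith
  have h1 := mul_pos ha (sub_pos.2 hx)
  have h2 := mul_nonneg hb (sub_nonneg.2 hy)
  subst e
  linarith

/-- Honest one-point extension: every segment from `P` to `z` crosses `P ∩ {f = c}`. -/
def StepF (P : Set E) (z : E) (f : E →L[ℝ] ℝ) (c : ℝ) : Prop :=
  c < f z ∧ ∀ p ∈ P, ∃ q ∈ P, q ∈ segment ℝ p z ∧ f q = c

def StepRel (P Q : Set E) : Prop :=
  ∃ z f c, StepF P z f c ∧ Q = convexHull ℝ (insert z P)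

theorem StepF.le {P : Set E} {z : E} {f : E →L[ℝ] ℝ} {c : ℝ} (h : StepF P z f c)
    {p : E} (hp : p ∈ P) : f p ≤ c := by
  obtain ⟨q, -, ⟨a, b, ha, hb, hab, rfl⟩, hq⟩ := h.2 p hp
  have hz := h.1
  simp only [map_add, map_smul, smul_eq_mul] at hq
  by_contra hlt
  push Not at hlt
  rcases ha.lt_or_eq with h' | h'
  · linarith [lt_comb h' hb hab hlt hz.le]
  · have : b = 1 := by linarith
    subst this
    subst h'
    linarith

/-- The set of points seen through the wall is convex. -/
theorem wall_convex {C : Set E} (hC : Convex ℝ C) {z : E} {f : E →L[ℝ] ℝ} {c : ℝ}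
    (hz : c < f z) : Convex ℝ {p | ∃ q ∈ C, q ∈ segment ℝ p z ∧ f q = c} := by
  rintro p1 ⟨q1, hq1, ⟨m1, l1, hm1, hl1, h1, rfl⟩, hf1⟩ p2
    ⟨q2, hq2, ⟨m2, l2, hm2, hl2, h2, rfl⟩, hf2⟩ a b ha hb hab
  have hm1 : 0 < m1 := by
    rcases hm1.lt_or_eq with h | h
    · exact h
    · subst h
      have : l1 = 1 := by linarith
      subst this
      simp at hf1
      linarith
  have hm2 : 0 < m2 := by
    rcases hm2.lt_or_eq with h | h
    · exact h
    · subst h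
      have : l2 = 1 := by linarith
      subst this
      simp at hf2
      linarith
  have hN : 0 < a * m2 + b * m1 := by
    rcases ha.lt_or_eq with h | h
    · have := mul_pos h hm2
      have := mul_nonneg hb hm1.le
      linarith
    · have : b = 1 := by linarith
      subst this
      subst h
      linarith
  set N := a * m2 + b * m1 with hNdef
  refine ⟨(a * m2 / N) • (m1 • p1 + l1 • z) + (b * m1 / N) • (m2 • p2 + l2 • z), ?_, ?_, ?_⟩
  · refine hC hq1 hq2 (by positivity) (by positivity) ?_
    rw [← add_div, ← hNdef, div_self hN.ne']
  · refine ⟨m1 * m2 / N, (a * m2 * l1 + b * m1 * l2) / N, by positivity, by positivity, ?_, ?_⟩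
    · rw [← add_div, div_eq_one_iff_eq hN.ne', hNdef]
      have e1 : l1 = 1 - m1 := by linarith
      have e2 : l2 = 1 - m2 := by linarith
      have e3 : b = 1 - a := by linarith
      rw [e1, e2, e3]; ring
    · module
  · rw [map_add, map_smul, map_smul, hf1, hf2, ← add_smul, ← add_div, ← hNdef, div_self hN.ne',
      one_smul]

theorem face_polytope (t : Finset E) (f : E →L[ℝ] ℝ) (c : ℝ)
    (hle : ∀ x ∈ convexHull ℝ (t : Set E), f x ≤ c) :
    IsPolytope (convexHull ℝ (t : Set E) ∩ {x | f x = c}) := by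
  classical
  refine ⟨t.filter (fun x => f x = c), Set.Subset.antisymm ?_ ?_⟩
  · have key : convexHull ℝ (t : Set E) ⊆
        {x | f x ≤ c ∧ (f x = c → x ∈ convexHull ℝ ((t.filter (fun x => f x = c) : Finset E) : Set E))} := by
      apply convexHull_min
      · intro x hx
        refine ⟨hle x (subset_convexHull ℝ _ hx), fun h => subset_convexHull ℝ _ ?_⟩
        simpa using ⟨hx, h⟩
      · rintro x ⟨hx, hx'⟩ y ⟨hy, hy'⟩ a b ha hb hab
        simp only [Set.mem_ofPred_eq, map_add, map_smul, smul_eq_mul]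
        refine ⟨comb_le ha hb hab hx hy, fun h => ?_⟩
        rcases ha.lt_or_eq with ha' | ha'
        · rcases hb.lt_or_eq with hb' | hb'
          · refine convex_convexHull ℝ _ (hx' ?_) (hy' ?_) ha hb hab
            · by_contra hne
              have := lt_of_le_of_ne hx hne
              linarith [comb_lt ha' hb hab this hy]
            · by_contra hne
              have := lt_of_le_of_ne hy hne
              linarith [comb_lt hb' ha ((add_comm b a).trans hab) this hx]
          · subst hb'
            have : a = 1 := by linarith
            subst this
            simp at h ⊢
            simpa using hx' h
        · subst ha'
          have : b = 1 := by linarith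
          subst this
          simp at h ⊢
          simpa using hy' h
    rintro x ⟨hx, hxc⟩
    exact (key hx).2 hxc
  · apply convexHull_min
    · intro x hx
      simp only [Finset.coe_filter, Set.mem_ofPred_eq] at hx
      exact ⟨subset_convexHull ℝ _ hx.1, hx.2⟩
    · refine (convex_convexHull ℝ _).inter ?_
      exact convex_hyperplane f.toLinearMap.isLinear c

theorem IsPolytope.convex {P : Set E} (h : IsPolytope P) : Convex ℝ P := by
  obtain ⟨s, rfl⟩ := h
  exact convex_convexHull ℝ _

theorem IsPolytope.isClosed {P : Set E} (h : IsPolytope P) : IsClosed P := by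
  obtain ⟨s, rfl⟩ := h
  exact (s.finite_toSet.isCompact_convexHull ℝ).isClosed

theorem IsPolytope.insert {P : Set E} (h : IsPolytope P) (z : E) :
    IsPolytope (convexHull ℝ (insert z P)) := by
  classical
  obtain ⟨s, rfl⟩ := h
  refine ⟨Insert.insert z s, ?_⟩
  rw [Finset.coe_insert, Set.insert_eq, Set.insert_eq, convexHull_union_convexHull_right']

theorem pyr_dim [FiniteDimensional ℝ E] {B : Set E} (hB : B.Nonempty) {v : E}
    (hv : v ∉ affineSpan ℝ B) : polyDim (convexHull ℝ (insert v B)) = polyDim B + 1 := by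
  obtain ⟨b, hb⟩ := hB
  have hb' : b ∈ affineSpan ℝ B := subset_affineSpan ℝ _ hb
  unfold polyDim
  rw [affineSpan_convexHull, ← affineSpan_insert_affineSpan,
    AffineSubspace.direction_affineSpan_insert hb']
  have hne : v -ᵥ b ≠ 0 := by
    intro h
    rw [vsub_eq_zero_iff_eq] at h
    exact hv (h ▸ hb')
  have hvd : v -ᵥ b ∉ (affineSpan ℝ B).direction := fun h =>
    hv ((AffineSubspace.vsub_right_mem_direction_iff_mem hb' v).1 h)
  have := Submodule.finrank_sup_add_finrank_inf_eq (ℝ ∙ (v -ᵥ b)) (affineSpan ℝ B).direction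
  have hd : Disjoint (ℝ ∙ (v -ᵥ b)) (affineSpan ℝ B).direction := by
    rw [disjoint_comm]
    exact (Submodule.disjoint_span_singleton' hne).2 hvd
  rw [hd.eq_bot, finrank_bot, finrank_span_singleton hne] at this
  omega

theorem polyDim_mono [FiniteDimensional ℝ E] {A B : Set E} (h : A ⊆ B) :
    polyDim A ≤ polyDim B :=
  Submodule.finrank_mono (AffineSubspace.direction_le (affineSpan_mono ℝ h))

theorem affineSpan_eq_of_polyDim [FiniteDimensional ℝ E] {A B : Set E} (h : A ⊆ B)
    (hA : A.Nonempty) (hd : polyDim B ≤ polyDim A) : affineSpan ℝ A = affineSpan ℝ B := by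
  refine AffineSubspace.eq_of_direction_eq_of_nonempty_of_le ?_
    ((affineSpan_nonempty ℝ).2 hA) (affineSpan_mono ℝ h)
  exact Submodule.eq_of_le_of_finrank_le
    (AffineSubspace.direction_le (affineSpan_mono ℝ h)) hd

theorem affineSpan_const {A : Set E} {f : E →L[ℝ] ℝ} {c : ℝ} (h : ∀ x ∈ A, f x = c)
    {y : E} (hy : y ∈ affineSpan ℝ A) : f y = c := by
  obtain ⟨x0, hx0⟩ := (affineSpan_nonempty ℝ).1 ⟨y, hy⟩
  have : affineSpan ℝ A ≤ AffineSubspace.mk' x0 f.toLinearMap.ker := by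
    rw [affineSpan_le]
    intro x hx
    simp [AffineSubspace.mem_mk', h x hx, h x0 hx0]
  have := this hy
  simp [AffineSubspace.mem_mk', h x0 hx0] at this
  linarith

theorem StepF.ext [FiniteDimensional ℝ E] {T : Set E} (hT : IsPolytope T) (hne : T.Nonempty)
    {z : E} {f : E →L[ℝ] ℝ} {c : ℝ} (h : StepF T z f c) :
    PyramidalExt T (convexHull ℝ (insert z T)) := by
  have hTc := hT.convex
  have hF : IsPolytope (T ∩ {x | f x = c}) := by
    obtain ⟨t, rfl⟩ := hT
    exact face_polytope t f c (fun x hx => h.le hx)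
  have hFne : (T ∩ {x | f x = c}).Nonempty := by
    obtain ⟨p, hp⟩ := hne
    obtain ⟨q, hq, -, hqc⟩ := h.2 p hp
    exact ⟨q, hq, hqc⟩
  set F := T ∩ {x | f x = c} with hFdef
  have hzF : z ∉ affineSpan ℝ F := by
    intro hz
    have := affineSpan_const (A := F) (fun x hx => hx.2) hz
    linarith [h.1]
  have hsub : T ⊆ convexHull ℝ (insert z T) :=
    (Set.subset_insert _ _).trans (subset_convexHull ℝ _)
  have hΔge : ∀ x ∈ convexHull ℝ (insert z F), c ≤ f x := by
    intro x hx
    have : convexHull ℝ (insert z F) ⊆ {x | c ≤ f x} := by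
      apply convexHull_min
      · rintro y (rfl | hy)
        · exact h.1.le
        · exact hy.2.ge
      · exact convex_halfSpace_ge f.toLinearMap.isLinear c
    exact this hx
  have hΔ : closure (convexHull ℝ (insert z T) \ T) = convexHull ℝ (insert z F) := by
    apply Set.Subset.antisymm
    · apply closure_minimal _ (hF.insert z).isClosed
      rintro x ⟨hx, hxT⟩
      rw [convexHull_insert hne, hTc.convexHull_eq] at hx
      simp only [convexJoin_singleton_left, Set.mem_iUnion] at hx
      obtain ⟨p, hp, hx⟩ := hx
      obtain ⟨q, hq, hqs, hqc⟩ := h.2 p hp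
      have hqF : q ∈ convexHull ℝ (insert z F) :=
        subset_convexHull ℝ _ (Or.inr ⟨hq, hqc⟩)
      have hzH : z ∈ convexHull ℝ (insert z F) := subset_convexHull ℝ _ (Or.inl rfl)
      rw [segment_symm] at hx
      obtain ⟨a, b, ha, hb, hab, rfl⟩ := hx
      obtain ⟨m, l, hm, hl, hml, rfl⟩ := hqs
      have ea : a = 1 - b := by linarith
      have em : m = 1 - l := by linarith
      rcases le_or_gt b l with hbl | hbl
      · exfalso
        apply hxT
        rcases hl.lt_or_eq with hl' | hl'
        · have := hTc hp hq (a := 1 - b / l) (b := b / l)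
            (by rw [sub_nonneg, div_le_one hl']; exact hbl) (by positivity) (by ring)
          convert this using 1
          subst ea em
          match_scalars <;> field_simp
          ring
        · have : b = 0 := by linarith
          subst this
          simpa [ea] using hp
      · have h1l : 0 < 1 - l := by linarith
        have := (convex_convexHull ℝ _) hqF hzH (a := (1 - b) / (1 - l)) (b := (b - l) / (1 - l))
          (div_nonneg (by linarith) h1l.le) (div_nonneg (by linarith) h1l.le)
          (by rw [← add_div, div_eq_one_iff_eq h1l.ne']; ring)
        convert this using 1
        subst ea em
        match_scalars <;> field_simp
        ring
    · intro x hx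
      have hxc := hΔge x hx
      have : x ∈ closure (openSegment ℝ x z) :=
        segment_subset_closure_openSegment (left_mem_segment ℝ x z)
      refine closure_mono ?_ this
      intro y hy
      refine ⟨?_, fun hyT => ?_⟩
      · have hx' : x ∈ convexHull ℝ (insert z T) :=
          convexHull_mono (Set.insert_subset_insert Set.inter_subset_left) hx
        exact (convex_convexHull ℝ _).openSegment_subset hx'
          (subset_convexHull ℝ _ (Or.inl rfl)) hy
      · obtain ⟨a, b, ha, hb, hab, rfl⟩ := hy
        have h1 := h.le hyT
        have h2 := h.1
        simp only [map_add, map_smul, smul_eq_mul] at h1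
        linarith [lt_comb hb ha.le ((add_comm b a).trans hab) h2 hxc]
  have hinter : convexHull ℝ (insert z F) ∩ T = F := by
    apply Set.Subset.antisymm
    · rintro x ⟨hx, hxT⟩
      exact ⟨hxT, le_antisymm (h.le hxT) (hΔge x hx)⟩
    · intro x hx
      exact ⟨subset_convexHull ℝ _ (Or.inr hx), hx.1⟩
  refine ⟨hT, hT.insert z, hsub, ⟨F, z, hF, hzF, ?_⟩, ?_, ?_⟩
  · rw [hΔ, Set.union_singleton]
  · rw [hΔ, hinter]
    intro _
    refine ⟨-f, ?_⟩
    ext x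
    constructor
    · intro hx
      refine ⟨subset_convexHull ℝ _ (Or.inr hx), fun y hy => ?_⟩
      have := hΔge y hy
      have hxc : f x = c := hx.2
      simp [hxc, this]
    · rintro ⟨hx, hmax⟩
      obtain ⟨q, hq⟩ := hFne
      have h1 := hmax q (subset_convexHull ℝ _ (Or.inr hq))
      have h2 : f q = c := hq.2
      simp only [neg_apply, h2, neg_le_neg_iff] at h1
      have hxc : f x = c := le_antisymm h1 (hΔge x hx)
      rw [convexHull_insert ⟨q, hq⟩, hF.convex.convexHull_eq] at hx
      simp only [convexJoin_singleton_left, Set.mem_iUnion] at hx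
      obtain ⟨p, hp, ⟨a, b, ha, hb, hab, rfl⟩⟩ := hx
      have hpc : f p = c := hp.2
      have hz := h.1
      simp only [map_add, map_smul, smul_eq_mul, hpc] at hxc
      have : a = 0 := by
        have : a * (f z - c) = 0 := by
          have : b = 1 - a := by linarith
          subst this
          linarith
        rcases mul_eq_zero.1 this with h | h
        · exact h
        · linarith
      subst this
      have : b = 1 := by linarith
      subst this
      simpa using hp
  · rw [hΔ, hinter, pyr_dim hFne hzF]

/-! ### From weak to honest growth -/

theorem StepRel.subset {P Q : Set E} (h : StepRel P Q) : P ⊆ Q := by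
  obtain ⟨z, f, c, -, rfl⟩ := h
  exact (Set.subset_insert _ _).trans (subset_convexHull ℝ _)

theorem chain_subset {P Q : Set E} (h : Relation.ReflTransGen StepRel P Q) : P ⊆ Q := by
  induction h with
  | refl => exact Set.Subset.rfl
  | tail _ h ih => exact ih.trans h.subset

theorem ext_chain_subset {P Q : Set E} (h : Relation.ReflTransGen PyramidalExt P Q) : P ⊆ Q := by
  induction h with
  | refl => exact Set.Subset.rfl
  | tail _ h ih => exact ih.trans h.2.2.1

/-- Adjust a functional off an affine subspace. -/
theorem adjust [FiniteDimensional ℝ E] {B : Set E} {v : E} (hv : v ∉ affineSpan ℝ B)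
    (hB : B.Nonempty) (g : E →L[ℝ] ℝ) (e : ℝ) :
    ∃ (g' : E →L[ℝ] ℝ) (e' : ℝ), g' v = e' ∧ ∀ x ∈ B, g' x - e' = g x - e := by
  obtain ⟨b, hb⟩ := hB
  have hb' : b ∈ affineSpan ℝ B := subset_affineSpan ℝ _ hb
  have hvd : v - b ∉ (affineSpan ℝ B).direction := fun h =>
    hv ((AffineSubspace.vsub_right_mem_direction_iff_mem hb' v).1 h)
  obtain ⟨φ, hφ, hφ'⟩ := Submodule.exists_dual_map_eq_bot_of_notMem hvd inferInstance
  have hφB : ∀ x ∈ B, φ x = φ b := by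
    intro x hx
    have hxd : x - b ∈ (affineSpan ℝ B).direction :=
      AffineSubspace.vsub_mem_direction (subset_affineSpan ℝ _ hx) hb'
    have : φ (x - b) ∈ Submodule.map φ (affineSpan ℝ B).direction := ⟨_, hxd, rfl⟩
    rw [hφ', Submodule.mem_bot, map_sub, sub_eq_zero] at this
    exact this
  have hne : φ v - φ b ≠ 0 := by rwa [← map_sub]
  set s := (e - g v) / (φ v - φ b) with hs
  refine ⟨g + s • LinearMap.toContinuousLinearMap φ, e + s * φ b, ?_, ?_⟩
  · have : s * (φ v - φ b) = e - g v := by rw [hs]; field_simp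
    simp
    linarith
  · intro x hx
    simp [hφB x hx]

theorem weak_step [FiniteDimensional ℝ E] {P Q : Set E} (hPne : P.Nonempty)
    (h : PyramidalExt P Q)
    (IH : ∀ X Y : Set E, IsPolytope X → IsPolytope Y → X.Nonempty → X ⊆ Y →
      polyDim Y < polyDim Q → Relation.ReflTransGen StepRel X Y) :
    Relation.ReflTransGen StepRel P Q := by
  obtain ⟨hP, hQ, hPQ, ⟨B, v, hB, hvB, hΔ⟩, hexp, hdim⟩ := h
  rw [Set.union_singleton] at hΔ
  have hΔQ : closure (Q \ P) ⊆ Q := closure_minimal Set.sdiff_subset hQ.isClosed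
  have hΔcl : IsClosed (closure (Q \ P)) := isClosed_closure
  have hQsub : Q ⊆ P ∪ closure (Q \ P) := by
    intro x hx
    by_cases hxP : x ∈ P
    · exact Or.inl hxP
    · exact Or.inr (subset_closure ⟨hx, hxP⟩)
  set Δ := closure (Q \ P) with hΔdef
  have key : ∀ p ∈ P, ∀ x ∈ Δ, ∃ q ∈ Δ ∩ P, q ∈ segment ℝ p x := by
    intro p hp x hx
    have hpre : IsPreconnected (segment ℝ p x) := (convex_segment p x).isPreconnected
    have := isPreconnected_closed_iff.1 hpre P Δ hP.isClosed hΔcl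
      ((hQ.convex.segment_subset (hPQ hp) (hΔQ hx)).trans hQsub)
      ⟨p, left_mem_segment ℝ _ _, hp⟩ ⟨x, right_mem_segment ℝ _ _, hx⟩
    obtain ⟨q, hq, hqP, hqΔ⟩ := this
    exact ⟨q, ⟨hqΔ, hqP⟩, hq⟩
  have hvΔ : v ∈ Δ := by rw [hΔ]; exact subset_convexHull ℝ _ (Or.inl rfl)
  have hBΔ : B ⊆ Δ := by
    rw [hΔ]; exact (Set.subset_insert _ _).trans (subset_convexHull ℝ _)
  have hFne : (Δ ∩ P).Nonempty := by
    obtain ⟨p, hp⟩ := hPne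
    obtain ⟨q, hq, -⟩ := key p hp v hvΔ
    exact ⟨q, hq⟩
  obtain ⟨l, hl⟩ := hexp hFne
  obtain ⟨q0, hq0⟩ := id hFne
  -- the wall
  obtain ⟨c, hge, hFeq⟩ : ∃ c, (∀ x ∈ Δ, c ≤ (-l) x) ∧ ∀ x, x ∈ Δ ∩ P ↔ x ∈ Δ ∧ (-l) x = c := by
    refine ⟨(-l) q0, ?_, ?_⟩
    · intro x hx
      rw [hl] at hq0
      simpa using hq0.2 x hx
    · intro x
      have hq0' := hq0
      rw [hl] at hq0'
      rw [hl]
      constructor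
      · rintro ⟨h1, h2⟩
        refine ⟨h1, ?_⟩
        have := h2 q0 hq0'.1
        have := hq0'.2 x h1
        simp
        linarith
      · rintro ⟨h1, h2⟩
        refine ⟨h1, fun y hy => ?_⟩
        have := hq0'.2 y hy
        simp at h2
        linarith
  set f := -l with hf
  have hBne : B.Nonempty := by
    by_contra hne
    rw [Set.not_nonempty_iff_eq_empty] at hne
    subst hne
    have : polyDim Δ = 0 := by
      rw [hΔ]
      unfold polyDim
      rw [affineSpan_convexHull]
      simp [direction_affineSpan]
    omega
  have hdimΔ : polyDim Δ = polyDim B + 1 := by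
    rw [hΔ]; exact pyr_dim hBne hvB
  have hQeq : ∀ A : Set E, P ⊆ A → Δ ⊆ A → A ⊆ Q → A = Q := fun A h1 h2 h3 =>
    h3.antisymm (hQsub.trans (Set.union_subset h1 h2))
  have hΔmem : ∀ x ∈ Δ, ∃ b ∈ B, ∃ s t : ℝ, 0 ≤ s ∧ 0 ≤ t ∧ s + t = 1 ∧ s • v + t • b = x := by
    intro x hx
    rw [hΔ, convexHull_insert hBne, hB.convex.convexHull_eq] at hx
    simp only [convexJoin_singleton_left, Set.mem_iUnion] at hx
    obtain ⟨b, hb, s, t, hs, ht, hst, h⟩ := hx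
    exact ⟨b, hb, s, t, hs, ht, hst, h⟩
  by_cases hvF : v ∈ Δ ∩ P
  · -- the apex lies in the common facet
    have hvc : f v = c := ((hFeq v).1 hvF).2
    obtain ⟨w, hw, hwc⟩ : ∃ w ∈ B, c < f w := by
      by_contra hcon
      push Not at hcon
      have : Δ ∩ P = Δ := by
        apply Set.Subset.antisymm Set.inter_subset_left
        intro x hx
        rw [hFeq]
        refine ⟨hx, le_antisymm ?_ (hge x hx)⟩
        obtain ⟨b, hb, s, t, hs, ht, hst, rfl⟩ := hΔmem x hx
        have := hcon b hb
        simp only [map_add, map_smul, smul_eq_mul, hvc]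
        exact comb_le hs ht hst le_rfl this
      rw [this] at hdim
      omega
    have hB' : IsPolytope (B ∩ {x | f x = c}) := by
      have h1 : B ∩ {x | f x = c} = B ∩ {x | l x = -c} := by
        ext x
        simp [hf, neg_eq_iff_eq_neg]
      rw [h1]
      have h2 : ∀ x ∈ B, l x ≤ -c := by
        intro x hx
        have := hge x (hBΔ hx)
        simp [hf] at this
        linarith
      obtain ⟨t, rfl⟩ := hB
      exact face_polytope t l (-c) h2
    set B' := B ∩ {x | f x = c} with hB'def
    have hB'P : B' ⊆ P := fun x hx => ((hFeq x).2 ⟨hBΔ hx.1, hx.2⟩).2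
    have hX0B : convexHull ℝ (insert w B') ⊆ B :=
      convexHull_min (Set.insert_subset hw Set.inter_subset_left) hB.convex
    have hdimB : polyDim B < polyDim Q := by
      have := polyDim_mono hΔQ
      omega
    have hchain := IH (convexHull ℝ (insert w B')) B (hB'.insert w) hB
      ⟨w, subset_convexHull ℝ _ (Or.inl rfl)⟩ hX0B hdimB
    have hFsub : ∀ X : Set E, B' ⊆ X → Δ ∩ P ⊆ convexHull ℝ (insert v X) := by
      intro X hX x hx
      rw [hFeq] at hx
      obtain ⟨hxΔ, hxc⟩ := hx
      obtain ⟨b, hb, s, t, hs, ht, hst, rfl⟩ := hΔmem x hxΔ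
      have hvX : v ∈ convexHull ℝ (insert v X) := subset_convexHull ℝ _ (Or.inl rfl)
      simp only [map_add, map_smul, smul_eq_mul, hvc] at hxc
      have hsc : s = 1 - t := by linarith
      have : t * (f b - c) = 0 := by subst hsc; linarith
      rcases mul_eq_zero.1 this with h | h
      · subst h
        have : s = 1 := by linarith
        subst this
        simpa using hvX
      · exact convex_convexHull ℝ _ hvX
          (subset_convexHull ℝ _ (Or.inr (hX ⟨hb, by simpa [sub_eq_zero] using h⟩))) hs ht hst
    have main : ∀ X : Set E, Relation.ReflTransGen StepRel X B → B' ⊆ X → 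
        Convex ℝ X → 
        Relation.ReflTransGen StepRel (convexHull ℝ (P ∪ X)) (convexHull ℝ (P ∪ B)) := by
      intro X hX
      induction hX using Relation.ReflTransGen.head_induction_on with
      | refl => intro _ _; exact Relation.ReflTransGen.refl
      | @head X X' hstep hrest ih =>
        intro hB'X hXc
        have hX'B := chain_subset hrest
        have hXB := hstep.subset.trans hX'B
        obtain ⟨z, g, e, hs, rfl⟩ := hstep
        refine Relation.ReflTransGen.head ?_ (ih (hB'X.trans
          ((Set.subset_insert _ _).trans (subset_convexHull ℝ _))) (convex_convexHull ℝ _))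
        have hzB : z ∈ B := hX'B (subset_convexHull ℝ _ (Or.inl rfl))
        obtain ⟨g', e', hg'v, hg'B⟩ := adjust hvB hBne g e
        have hez : e' < g' z := by
          have := hg'B z hzB
          have := hs.1
          linarith
        refine ⟨z, g', e', ⟨hez, ?_⟩, ?_⟩
        · have hC1 : ∀ p ∈ convexHull ℝ (insert v X),
              ∃ q ∈ convexHull ℝ (insert v X), q ∈ segment ℝ p z ∧ g' q = e' := by
            have := convexHull_min (s := insert v X) (t := {p | ∃ q ∈ convexHull ℝ (insert v X),
              q ∈ segment ℝ p z ∧ g' q = e'}) ?_ (wall_convex (convex_convexHull ℝ _) hez)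
            · exact this
            · rintro p (rfl | hp)
              · exact ⟨p, subset_convexHull ℝ _ (Or.inl rfl), left_mem_segment ℝ _ _, hg'v⟩
              · obtain ⟨q, hq, hqs, hqe⟩ := hs.2 p hp
                refine ⟨q, subset_convexHull ℝ _ (Or.inr hq), hqs, ?_⟩
                have := hg'B q (hXB hq)
                linarith
          have hCsub : convexHull ℝ (insert v X) ⊆ convexHull ℝ (P ∪ X) := by
            apply convexHull_mono
            exact Set.insert_subset (Or.inl hvF.2) Set.subset_union_right
          have := convexHull_min (s := P ∪ X) (t := {p | ∃ q ∈ convexHull ℝ (P ∪ X),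
              q ∈ segment ℝ p z ∧ g' q = e'}) ?_ (wall_convex (convex_convexHull ℝ _) hez)
          · exact this
          · rintro p (hp | hp)
            · obtain ⟨q, hqF, hqs⟩ := key p hp z (hBΔ hzB)
              obtain ⟨q', hq', hqs', hqe⟩ := hC1 q (hFsub X hB'X hqF)
              refine ⟨q', hCsub hq', ?_, hqe⟩
              exact (convex_segment p z).segment_subset hqs (right_mem_segment ℝ _ _) hqs'
            · obtain ⟨q, hq, hqs, hqe⟩ := hC1 p (subset_convexHull ℝ _ (Or.inr hp))
              exact ⟨q, hCsub hq, hqs, hqe⟩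
        · rw [convexHull_union_convexHull_right', Set.insert_eq z (convexHull ℝ _), convexHull_union_convexHull_right']
          congr 1
          ext x
          simp only [Set.mem_union, Set.mem_insert_iff, Set.mem_singleton_iff]
          tauto
    have hfirst : StepRel P (convexHull ℝ (P ∪ convexHull ℝ (insert w B'))) := by
      refine ⟨w, f, c, ⟨hwc, ?_⟩, ?_⟩
      · intro p hp
        obtain ⟨q, hq, hqs⟩ := key p hp w (hBΔ hw)
        exact ⟨q, hq.2, hqs, ((hFeq q).1 hq).2⟩
      · rw [convexHull_union_convexHull_right']
        congr 1
        ext x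
        simp only [Set.mem_union, Set.mem_insert_iff]
        have : x ∈ B' → x ∈ P := fun h => hB'P h
        tauto
    have hlast : convexHull ℝ (P ∪ B) = Q := by
      apply hQeq
      · exact Set.subset_union_left.trans (subset_convexHull ℝ _)
      · conv_lhs => rw [hΔ]
        exact convexHull_mono (Set.insert_subset (Or.inl hvF.2) Set.subset_union_right)
      · exact convexHull_min (Set.union_subset hPQ (hBΔ.trans hΔQ)) hQ.convex
    have hm := main _ hchain
      ((Set.subset_insert _ _).trans (subset_convexHull ℝ _)) (convex_convexHull ℝ _)
    rw [hlast] at hm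
    exact Relation.ReflTransGen.head hfirst hm
  · -- the apex is off the common facet, which is therefore the base
    have hvc : c < f v := by
      refine lt_of_le_of_ne (hge v hvΔ) (fun h => hvF ?_)
      rw [hFeq]
      exact ⟨hvΔ, h.symm⟩
    have hFB : Δ ∩ P ⊆ B := by
      intro x hx
      rw [hFeq] at hx
      obtain ⟨hxΔ, hxc⟩ := hx
      obtain ⟨b, hb, s, t, hs, ht, hst, rfl⟩ := hΔmem x hxΔ
      have hbc := hge b (hBΔ hb)
      simp only [map_add, map_smul, smul_eq_mul] at hxc
      have : s = 0 := by
        by_contra hne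
        have : 0 < s := lt_of_le_of_ne hs (Ne.symm hne)
        linarith [lt_comb this ht hst hvc hbc]
      subst this
      have : t = 1 := by linarith
      subst this
      simpa using hb
    have hspan := affineSpan_eq_of_polyDim hFB hFne (by omega)
    have hBP : B ⊆ P := by
      intro b hb
      have hb' : b ∈ affineSpan ℝ (Δ ∩ P) := by
        rw [hspan]; exact subset_affineSpan ℝ _ hb
      have := affineSpan_const (f := f) (c := c) (fun x hx => ((hFeq x).1 hx).2) hb'
      exact ((hFeq b).2 ⟨hBΔ hb, this⟩).2
    refine Relation.ReflTransGen.single ⟨v, f, c, ⟨hvc, ?_⟩, ?_⟩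
    · intro p hp
      obtain ⟨q, hq, hqs⟩ := key p hp v hvΔ
      exact ⟨q, hq.2, hqs, ((hFeq q).1 hq).2⟩
    · symm
      apply hQeq
      · exact (Set.subset_insert _ _).trans (subset_convexHull ℝ _)
      · conv_lhs => rw [hΔ]
        exact convexHull_mono (Set.insert_subset_insert hBP)
      · exact convexHull_min (Set.insert_subset (hΔQ hvΔ) hPQ) hQ.convex

theorem strong_growth [FiniteDimensional ℝ E] (d : ℕ)
    (hind : ∀ P Q : Set E,
      IsPolytope P → IsPolytope Q → P.Nonempty → polyDim P ≤ d → polyDim Q ≤ d →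
      P ⊆ Q → Relation.ReflTransGen PyramidalExt P Q) :
    ∀ k ≤ d, ∀ P Q : Set E, IsPolytope P → IsPolytope Q → P.Nonempty → P ⊆ Q → polyDim Q = k →
      Relation.ReflTransGen StepRel P Q := by
  intro k
  induction k using Nat.strong_induction_on with
  | _ k IH =>
    intro hk P Q hP hQ hne hPQ hdim
    have hw := hind P Q hP hQ hne ((polyDim_mono hPQ).trans (by omega)) (by omega) hPQ
    clear hP hPQ
    induction hw using Relation.ReflTransGen.head_induction_on with
    | refl => exact Relation.ReflTransGen.refl
    | @head X X' hstep hrest ih =>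
      refine Relation.ReflTransGen.trans ?_ (ih (hne.mono hstep.2.2.1))
      apply weak_step hne hstep
      intro A C hA hC hAne hAC hlt
      have : polyDim X' ≤ polyDim Q := polyDim_mono (ext_chain_subset hrest)
      exact IH (polyDim C) (by omega) (by omega) A C hA hC hAne hAC rfl

/-! ### Cones -/

theorem coneOf_convex {C : Set E} (hC : Convex ℝ C) : Convex ℝ (coneOf C) := by
  rintro _ ⟨s, hs, x, hx, rfl⟩ _ ⟨t, ht, y, hy, rfl⟩ a b ha hb hab
  rcases (add_nonneg (mul_nonneg ha hs) (mul_nonneg hb ht)).lt_or_eq with h | h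
  · refine ⟨a * s + b * t, h.le, (a * s / (a * s + b * t)) • x + (b * t / (a * s + b * t)) • y,
      hC hx hy (by positivity) (by positivity) (by rw [← add_div, div_self h.ne']), ?_⟩
    match_scalars <;> field_simp
  · have h1 : a * s = 0 := by nlinarith [mul_nonneg ha hs, mul_nonneg hb ht]
    have h2 : b * t = 0 := by nlinarith [mul_nonneg ha hs, mul_nonneg hb ht]
    refine ⟨0, le_rfl, x, hx, ?_⟩
    rw [smul_smul, smul_smul, h1, h2]
    simp

theorem subset_coneOf (C : Set E) : C ⊆ coneOf C := fun x hx => ⟨1, zero_le_one, x, hx, by simp⟩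

theorem smul_mem_coneOf {C : Set E} {x : E} (hx : x ∈ coneOf C) {a : ℝ} (ha : 0 ≤ a) :
    a • x ∈ coneOf C := by
  obtain ⟨c, hc, y, hy, rfl⟩ := hx
  exact ⟨a * c, by positivity, y, hy, by rw [smul_smul]⟩

theorem coneOf_le {A C : Set E} (h : A ⊆ coneOf C) : coneOf A ⊆ coneOf C := by
  rintro _ ⟨c, hc, y, hy, rfl⟩
  exact smul_mem_coneOf (h hy) hc

theorem coneOf_hull_le {A C : Set E} (hC : Convex ℝ C) (h : A ⊆ coneOf C) :
    coneOf (convexHull ℝ A) ⊆ coneOf C :=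
  coneOf_le (convexHull_min h (coneOf_convex hC))

/-- Lifting a step of cross-sections to a step of polytopes. -/
theorem lift_step {S T X : Set E} (hS : Convex ℝ S) (h0S : (0 : E) ∈ S)
    (hT : IsPolytope T) (h0T : (0 : E) ∈ T) (hcone : coneOf T = coneOf X)
    {h : E →L[ℝ] ℝ} (hX : ∀ x ∈ X, h x = 1) {z : E} (hz : h z = 1) (hzS : z ∈ coneOf S)
    {f : E →L[ℝ] ℝ} {c : ℝ} (hs : StepF X z f c) :
    ∃ ε : ℝ, 0 < ε ∧ ε • z ∈ S ∧ ∃ g : E →L[ℝ] ℝ, StepF T (ε • z) g 0 := by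
  have hTc := hT.convex
  obtain ⟨g, hg⟩ : ∃ g : E →L[ℝ] ℝ, ∀ x, g x = f x - c * h x := ⟨f - c • h, fun x => by simp⟩
  have hgz : 0 < g z := by rw [hg, hz]; linarith [hs.1]
  have hr : ∀ r ∈ T, ∀ᶠ ε in nhdsWithin (0 : ℝ) (Set.Ioi 0),
      ∃ q ∈ T, q ∈ segment ℝ r (ε • z) ∧ g q = 0 := by
    intro r hrT
    have : r ∈ coneOf X := hcone ▸ subset_coneOf T hrT
    obtain ⟨t, ht, p, hp, rfl⟩ := this
    have hgp : g p ≤ 0 := by rw [hg, hX p hp]; linarith [hs.le hp]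
    rcases eq_or_ne (g (t • p)) 0 with h0 | h0
    · exact Filter.Eventually.of_forall fun ε => ⟨t • p, hrT, left_mem_segment ℝ _ _, h0⟩
    have hneg : g (t • p) < 0 := by
      refine lt_of_le_of_ne ?_ h0
      rw [map_smul, smul_eq_mul]
      exact mul_nonpos_of_nonneg_of_nonpos ht hgp
    have hu : g z • (t • p) - g (t • p) • z ∈ coneOf T := by
      obtain ⟨q, hq, ⟨m, l, hm, hl, hml, rfl⟩, hqc⟩ := hs.2 p hp
      have hgq : g (m • p + l • z) = 0 := by rw [hg, hX _ hq]; linarith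
      rw [hcone]
      refine ⟨t * (g z - g p), mul_nonneg ht (by linarith), _, hq, ?_⟩
      simp only [map_add, map_smul, smul_eq_mul] at hgq ⊢
      have em : m = 1 - l := by linarith
      subst em
      have e1 : l * (g z - g p) = - g p := by linarith
      have e2 : (1 - l) * (g z - g p) = g z := by linarith
      rw [smul_add, smul_smul, smul_smul, smul_smul,
        show t * (g z - g p) * (1 - l) = t * ((1 - l) * (g z - g p)) by ring,
        show t * (g z - g p) * l = t * (l * (g z - g p)) by ring, e1, e2]
      module
    obtain ⟨a, ha, y, hy, hya⟩ := hu
    set r := t • p with hrdef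
    have hδ : 0 < -g r / (a + 1) := div_pos (by linarith) (by linarith)
    filter_upwards [Ioo_mem_nhdsGT hδ] with ε hε
    obtain ⟨hε0, hε1⟩ := hε
    rw [lt_div_iff₀ (by linarith)] at hε1
    have hN : 0 < ε * g z - g r := by nlinarith [mul_pos hε0 hgz]
    have hk0 : 0 ≤ ε / (ε * g z - g r) * a := by positivity
    have hk1 : ε / (ε * g z - g r) * a ≤ 1 := by
      rw [div_mul_eq_mul_div, div_le_one hN]
      nlinarith [mul_pos hε0 hgz]
    refine ⟨(ε / (ε * g z - g r)) • (a • y), ?_, ?_, ?_⟩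
    · have := hTc h0T hy (a := 1 - ε / (ε * g z - g r) * a) (b := ε / (ε * g z - g r) * a)
        (by linarith) hk0 (by ring)
      simpa [smul_smul] using this
    · rw [← hya]
      refine ⟨ε * g z / (ε * g z - g r), -g r / (ε * g z - g r), by positivity,
        div_nonneg (by linarith) hN.le, ?_, ?_⟩
      · rw [← add_div, div_eq_one_iff_eq hN.ne']; ring
      · module
    · rw [← hya]
      simp only [map_smul, map_sub, smul_eq_mul]
      ring
  have hall : ∀ᶠ ε in nhdsWithin (0 : ℝ) (Set.Ioi 0), ∀ r ∈ T,
      ∃ q ∈ T, q ∈ segment ℝ r (ε • z) ∧ g q = 0 := by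
    obtain ⟨t, rfl⟩ := id hT
    have h1 := (Filter.eventually_all_finset t).2 (fun i hi => hr i (subset_convexHull ℝ _ hi))
    filter_upwards [h1, self_mem_nhdsWithin] with ε hε hε0
    have hgε : 0 < g (ε • z) := by
      rw [map_smul, smul_eq_mul]; exact mul_pos hε0 hgz
    exact convexHull_min (fun i hi => hε i hi) (wall_convex hTc hgε)
  have hSε : ∀ᶠ ε in nhdsWithin (0 : ℝ) (Set.Ioi 0), ε • z ∈ S := by
    obtain ⟨a, ha, y, hy, rfl⟩ := hzS
    filter_upwards [Ioo_mem_nhdsGT (show (0 : ℝ) < 1 / (a + 1) by positivity)] with ε hε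
    obtain ⟨hε0, hε1⟩ := hε
    rw [lt_div_iff₀ (by linarith)] at hε1
    have := hS h0S hy (a := 1 - ε * a) (b := ε * a) (by nlinarith) (by positivity) (by ring)
    simpa [smul_smul] using this
  obtain ⟨ε, ⟨h1, h2⟩, h3⟩ := ((hall.and hSε).and self_mem_nhdsWithin).exists
  refine ⟨ε, h3, h2, g, ?_, h1⟩
  rw [map_smul, smul_eq_mul]
  exact mul_pos h3 hgz

/-- Polytopes reachable from `R` by one-point pyramidal extensions inside `S`. -/
def Reach (R S T : Set E) : Prop :=
  ∃ (m : ℕ) (z : ℕ → E), (∀ j < m, z j ∈ S) ∧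
      (∀ j < m, PyramidalExt (convexHull ℝ (R ∪ z '' Set.Iio j))
        (convexHull ℝ (R ∪ z '' Set.Iio (j + 1)))) ∧
      T = convexHull ℝ (R ∪ z '' Set.Iio m)

theorem Reach.step {R S T : Set E} (h : Reach R S T) {w : E} (hw : w ∈ S)
    (he : PyramidalExt T (convexHull ℝ (insert w T))) :
    Reach R S (convexHull ℝ (insert w T)) := by
  obtain ⟨m, z, hz, hext, rfl⟩ := h
  have hag : ∀ j ≤ m, Function.update z m w '' Set.Iio j = z '' Set.Iio j := by
    intro j hj
    apply Set.image_congr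
    intro i hi
    have : i ≠ m := by have := Set.mem_Iio.1 hi; omega
    simp [Function.update_of_ne this]
  have hlast : convexHull ℝ (R ∪ Function.update z m w '' Set.Iio (m + 1)) =
      convexHull ℝ (insert w (convexHull ℝ (R ∪ z '' Set.Iio m))) := by
    have : Set.Iio (m + 1) = insert m (Set.Iio m) := by
      ext i; simp only [Set.mem_Iio, Set.mem_insert_iff]; omega
    rw [this, Set.image_insert_eq, hag m le_rfl, Function.update_self, Set.insert_eq w (convexHull ℝ _),
      convexHull_union_convexHull_right']
    congr 1
    ext x
    simp only [Set.mem_union, Set.mem_insert_iff, Set.mem_singleton_iff]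
    tauto
  refine ⟨m + 1, Function.update z m w, ?_, ?_, hlast.symm⟩
  · intro j hj
    rcases eq_or_ne j m with rfl | hne
    · simpa using hw
    · rw [Function.update_of_ne hne]
      exact hz j (by omega)
  · intro j hj
    rcases eq_or_ne j m with rfl | hne
    · rw [hlast, hag j le_rfl]
      exact he
    · rw [hag j (by omega), hag (j + 1) (by omega)]
      exact hext j (by omega)

theorem lift_chain [FiniteDimensional ℝ E] {R S : Set E} (hS : Convex ℝ S) (h0S : (0 : E) ∈ S)
    {h : E →L[ℝ] ℝ} {X Q : Set E} (hQ : ∀ x ∈ Q, h x = 1) (hQS : Q ⊆ coneOf S)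
    (hch : Relation.ReflTransGen StepRel X Q) :
    ∀ T, Reach R S T → IsPolytope T → (0 : E) ∈ T → coneOf T = coneOf X → Convex ℝ X →
      ∃ T', Reach R S T' ∧ coneOf T' = coneOf Q := by
  induction hch using Relation.ReflTransGen.head_induction_on with
  | refl => intro T h1 _ _ h2 _; exact ⟨T, h1, h2⟩
  | @head X X' hstep hrest ih =>
    intro T hT hTp h0T hcone hXc
    have hX'Q := chain_subset hrest
    have hXQ := hstep.subset.trans hX'Q
    obtain ⟨z, f, c, hs, rfl⟩ := hstep
    have hzQ : z ∈ Q := hX'Q (subset_convexHull ℝ _ (Or.inl rfl))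
    obtain ⟨ε, hε, hεS, g, hg⟩ := lift_step hS h0S hTp h0T hcone (fun x hx => hQ x (hXQ hx))
      (hQ z hzQ) (hQS hzQ) hs
    refine ih _ (hT.step hεS (hg.ext hTp ⟨0, h0T⟩)) (hTp.insert _)
      (subset_convexHull ℝ _ (Or.inr h0T)) ?_ (convex_convexHull ℝ _)
    apply Set.Subset.antisymm
    · apply coneOf_hull_le (convex_convexHull ℝ _)
      rintro x (rfl | hx)
      · exact smul_mem_coneOf (subset_coneOf _ (subset_convexHull ℝ _ (Set.mem_insert z X))) hε.le
      · have : x ∈ coneOf X := hcone ▸ subset_coneOf T hx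
        exact coneOf_le (fun y hy => subset_coneOf _ (subset_convexHull ℝ _ (Or.inr hy))) this
    · apply coneOf_hull_le (convex_convexHull ℝ _)
      rintro x (rfl | hx)
      · refine ⟨ε⁻¹, by positivity, ε • x, subset_convexHull ℝ _ (Or.inl rfl), ?_⟩
        rw [smul_smul, inv_mul_cancel₀ hε.ne', one_smul]
      · have : x ∈ coneOf T := hcone ▸ subset_coneOf X hx
        exact coneOf_le (fun y hy => subset_coneOf _ (subset_convexHull ℝ _ (Or.inr hy))) this

/-- A functional positive on a polytope away from its vertex `0`. -/
theorem exists_height {S : Set E} (hS : IsPolytope S)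
    (h0 : (0 : E) ∈ Set.extremePoints ℝ S) : ∃ h : E →L[ℝ] ℝ, ∀ x ∈ S, x ≠ 0 → 0 < h x := by
  classical
  obtain ⟨s, rfl⟩ := hS
  have hdiff := ((convex_convexHull ℝ (s : Set E)).mem_extremePoints_iff_convex_sdiff.1 h0).2
  have hsub : convexHull ℝ ((s.erase 0 : Finset E) : Set E) ⊆ convexHull ℝ (s : Set E) \ {0} := by
    apply convexHull_min _ hdiff
    intro x hx
    simp only [Finset.coe_erase] at hx
    exact ⟨subset_convexHull ℝ _ hx.1, hx.2⟩
  have hnot : (0 : E) ∉ convexHull ℝ ((s.erase 0 : Finset E) : Set E) := fun h => (hsub h).2 rfl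
  obtain ⟨h, u, hu0, hu⟩ := geometric_hahn_banach_point_closed (convex_convexHull ℝ _)
    ((s.erase 0).finite_toSet.isCompact_convexHull ℝ).isClosed hnot
  simp only [map_zero] at hu0
  refine ⟨h, ?_⟩
  have key : convexHull ℝ (s : Set E) ⊆ {x : E | 0 ≤ h x ∧ (h x = 0 → x = 0)} := by
    apply convexHull_min
    · intro x hx
      by_cases hx0 : x = 0
      · simp [hx0]
      · have := hu x (subset_convexHull ℝ _ (by simpa using ⟨hx, hx0⟩))
        exact ⟨by linarith, fun h => by linarith⟩
    · rintro x ⟨hx, hx'⟩ y ⟨hy, hy'⟩ a b ha hb hab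
      simp only [Set.mem_ofPred_eq, map_add, map_smul, smul_eq_mul]
      refine ⟨by positivity, fun h => ?_⟩
      have h1 : a * _ = 0 := le_antisymm (by nlinarith [mul_nonneg hb hy]) (mul_nonneg ha hx)
      have h2 : b * _ = 0 := le_antisymm (by nlinarith [mul_nonneg ha hx]) (mul_nonneg hb hy)
      have e1 : a • x = 0 := by
        rcases mul_eq_zero.1 h1 with h | h
        · simp [h]
        · simp [hx' h]
      have e2 : b • y = 0 := by
        rcases mul_eq_zero.1 h2 with h | h
        · simp [h]
        · simp [hy' h]
      rw [e1, e2, add_zero]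
  intro x hx hx0
  exact lt_of_le_of_ne (key hx).1 (fun h => hx0 ((key hx).2 h.symm))

theorem exists_section {S : Set E} (hS : IsPolytope S) (h0 : (0 : E) ∈ S)
    (h : E →L[ℝ] ℝ) (hpos : ∀ x ∈ S, x ≠ 0 → 0 < h x) (hne : ∃ x ∈ S, x ≠ 0) :
    ∃ Q : Set E, IsPolytope Q ∧ Q.Nonempty ∧ (∀ x, x ∈ Q ↔ x ∈ coneOf S ∧ h x = 1) ∧
      coneOf Q = coneOf S := by
  classical
  obtain ⟨s, rfl⟩ := id hS
  have hQS : convexHull ℝ (((s.erase 0).image fun x => (h x)⁻¹ • x : Finset E) : Set E) ⊆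
      {x | x ∈ coneOf (convexHull ℝ (s : Set E)) ∧ h x = 1} := by
    apply convexHull_min
    · intro x hx
      simp only [Finset.coe_image, Finset.coe_erase, Set.mem_image] at hx
      obtain ⟨y, hy, rfl⟩ := hx
      have hyS := subset_convexHull ℝ _ hy.1
      have := hpos y hyS hy.2
      refine ⟨⟨(h y)⁻¹, by positivity, y, hyS, rfl⟩, ?_⟩
      simp [this.ne']
    · exact (coneOf_convex (convex_convexHull ℝ _)).inter
        (convex_hyperplane h.toLinearMap.isLinear 1)
  have hQp : IsPolytope (convexHull ℝ (((s.erase 0).image fun x => (h x)⁻¹ • x : Finset E) : Set E)) :=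
    ⟨_, rfl⟩
  have hQne : (convexHull ℝ
      (((s.erase 0).image fun x => (h x)⁻¹ • x : Finset E) : Set E)).Nonempty := by
    rw [convexHull_nonempty_iff]
    obtain ⟨x, hx, hx0⟩ := hne
    have : ∃ y ∈ s, y ≠ 0 := by
      by_contra hcon
      push Not at hcon
      have : convexHull ℝ (s : Set E) ⊆ {0} :=
        convexHull_min (fun y hy => hcon y hy) (convex_singleton 0)
      exact hx0 (this hx)
    obtain ⟨y, hy, hy0⟩ := this
    refine ⟨(h y)⁻¹ • y, ?_⟩
    simp only [Finset.coe_image, Finset.coe_erase]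
    exact ⟨y, ⟨hy, hy0⟩, rfl⟩
  have hSQ : ∀ y ∈ s, y ∈ coneOf (convexHull ℝ
      (((s.erase 0).image fun x => (h x)⁻¹ • x : Finset E) : Set E)) := by
    intro y hy
    by_cases hy0 : y = 0
    · obtain ⟨q, hq⟩ := hQne
      exact ⟨0, le_rfl, q, hq, by simp [hy0]⟩
    · have := hpos y (subset_convexHull ℝ _ hy) hy0
      refine ⟨h y, this.le, (h y)⁻¹ • y, subset_convexHull ℝ _ ?_, ?_⟩
      · simp only [Finset.coe_image, Finset.coe_erase]
        exact ⟨y, ⟨hy, hy0⟩, rfl⟩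
      · rw [smul_smul, mul_inv_cancel₀ this.ne', one_smul]
  have hcone := Set.Subset.antisymm (coneOf_le (fun x hx => (hQS hx).1))
    (coneOf_hull_le hQp.convex hSQ)
  refine ⟨_, hQp, hQne, fun x => ⟨fun hx => hQS hx, ?_⟩, hcone⟩
  rintro ⟨hx, hx1⟩
  rw [← hcone] at hx
  obtain ⟨c, hc, y, hy, rfl⟩ := hx
  have hy1 : h y = 1 := (hQS hy).2
  rw [map_smul, smul_eq_mul, hy1, mul_one] at hx1
  subst hx1
  simpa using hy

theorem polyDim_lt_of_height [FiniteDimensional ℝ E] {Q : Set E} (hne : Q.Nonempty)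
    (h : E →L[ℝ] ℝ) (hQ : ∀ x ∈ Q, h x = 1) : polyDim Q < Module.finrank ℝ E := by
  have hnot : (0 : E) ∉ affineSpan ℝ Q := by
    intro h0
    have := affineSpan_const hQ h0
    simp at this
  have h1 := pyr_dim hne hnot
  have h2 : polyDim (convexHull ℝ (insert (0 : E) Q)) ≤ Module.finrank ℝ E := by
    unfold polyDim
    exact Submodule.finrank_le _
  omega

theorem exists_ne_zero_of_polyDim {S : Set E} {n : ℕ} (h : polyDim S = n + 1) :
    ∃ x ∈ S, x ≠ 0 := by
  by_contra hcon
  push Not at hcon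
  have hs : S.Subsingleton := fun x hx y hy => (hcon x hx).trans (hcon y hy).symm
  unfold polyDim at h
  rw [direction_affineSpan, vectorSpan_of_subsingleton ℝ hs, finrank_bot] at h
  omega

end Aux

theorem stmt15 {d : ℕ} (R S : Set (EuclideanSpace ℝ (Fin (d + 1))))
    (hR : IsPolytope R) (hS : IsPolytope S)
    (hdR : polyDim R = d + 1) (hdS : polyDim S = d + 1)
    (hRS : R ⊆ S)
    (h0R : (0 : EuclideanSpace ℝ (Fin (d + 1))) ∈ Set.extremePoints ℝ R)
    (h0S : (0 : EuclideanSpace ℝ (Fin (d + 1))) ∈ Set.extremePoints ℝ S)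
    -- pyramidal growth coincides with inclusion in dimension d
    (hind : ∀ P Q : Set (EuclideanSpace ℝ (Fin (d + 1))),
      IsPolytope P → IsPolytope Q → P.Nonempty → polyDim P ≤ d → polyDim Q ≤ d →
      P ⊆ Q → Relation.ReflTransGen PyramidalExt P Q) :
    ∃ (m : ℕ) (z : ℕ → EuclideanSpace ℝ (Fin (d + 1))),
      (∀ j < m, z j ∈ S) ∧
      (∀ j < m, PyramidalExt (convexHull ℝ (R ∪ z '' Set.Iio j))
        (convexHull ℝ (R ∪ z '' Set.Iio (j + 1)))) ∧
      coneOf (convexHull ℝ (R ∪ z '' Set.Iio m)) = coneOf S := by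
  obtain ⟨h, hpos⟩ := exists_height hS h0S
  obtain ⟨Q, hQ, hQne, hQmem, hQcone⟩ := exists_section hS h0S.1 h hpos
    (exists_ne_zero_of_polyDim hdS)
  obtain ⟨P, hP, hPne, hPmem, hPcone⟩ := exists_section hR h0R.1 h
    (fun x hx hx0 => hpos x (hRS hx) hx0) (exists_ne_zero_of_polyDim hdR)
  have hPQ : P ⊆ Q := by
    intro x hx
    rw [hPmem] at hx
    rw [hQmem]
    exact ⟨coneOf_le (hRS.trans (subset_coneOf S)) hx.1, hx.2⟩
  have hdim : polyDim Q ≤ d := by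
    have := polyDim_lt_of_height hQne h (fun x hx => ((hQmem x).1 hx).2)
    simp at this
    omega
  have hch := strong_growth d hind _ hdim P Q hP hQ hPne hPQ rfl
  obtain ⟨T, ⟨m, z, hz, hext, rfl⟩, hT⟩ := lift_chain (R := R) hS.convex h0S.1
    (fun x hx => ((hQmem x).1 hx).2) (fun x hx => ((hQmem x).1 hx).1) hch R
    ⟨0, fun _ => 0, by simp, by simp, by simp [hR.convex.convexHull_eq]⟩ hR h0R.1 hPcone.symm hP.convex
  exact ⟨m, z, hz, hext, hT.trans hQcone⟩
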